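/- Let ν be a probability measure on [0,∞) with cumulative distribution function F such that F̄ = 1 − F is everywhere positive and regularly varying at infinity with index θ − α for some 0 < θ < α, and let (a_n) be a sequence with a_n → ∞ and lim_{n→∞} n a_n^{−α} H(a_n) = 1. Then for all real 0 ≤ s ≤ t, every z > 0 and every ε ∈ {0,1}: (a) lim_{n→∞} ( ⌊nt⌋ − ⌊ns⌋ ) · (a_n z)^{−α} H( a_n z ) = (t − s) z^{θ−α}, and (b) lim_{n→∞} G( a_n z )^{⌊nt⌋ − ⌊ns⌋ − ε} = exp( −(α/(α−θ)) (t − s) z^{θ−α} ). -/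

import Mathlib

open MeasureTheory Filter Real Topology

/-- Potter-type bound, iterated form. -/
lemma kfdd_iter (T : ℝ → ℝ) (hpos : ∀ x, 0 < T x) (hanti : Antitone T) (β x0 : ℝ) (hβ : 0 < β)
    (hx0 : 0 < x0) (h2 : ∀ t, x0 ≤ t → T (t / 2) ≤ (2:ℝ) ^ β * T t) (k : ℕ) :
    ∀ x t, x0 ≤ x → x ≤ t → t ≤ 2 ^ k * x → T x ≤ (2:ℝ) ^ β * (t / x) ^ β * T t := by
  induction k with
  | zero =>
    intro x t hx hxt ht
    have : t = x := by simp at ht; linarith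
    subst this
    have ht0 : t ≠ 0 := by linarith
    rw [div_self ht0, one_rpow, mul_one]
    have := Real.one_le_rpow (x := 2) (by norm_num) hβ.le
    nlinarith [hpos t]
  | succ k ih =>
    intro x t hx hxt ht
    have hxp : 0 < x := by linarith
    have htp : 0 < t := by linarith
    have h2t := h2 t (by linarith)
    have h2p : (0:ℝ) < 2 ^ β := by positivity
    by_cases h : t ≤ 2 * x
    · have h1 : T x ≤ T (t / 2) := hanti (by linarith)
      have h3 : 1 ≤ (t / x) ^ β :=
        Real.one_le_rpow ((one_le_div hxp).2 hxt) hβ.le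
      have h4 : (2:ℝ) ^ β * T t ≤ (2:ℝ) ^ β * (t / x) ^ β * T t := by
        have := mul_pos h2p (hpos t)
        nlinarith
      linarith
    · push Not at h
      have h1 := ih x (t / 2) hx (by linarith) (by rw [pow_succ] at ht; linarith)
      have h3 : (t / 2 / x) ^ β = (t / x) ^ β / 2 ^ β := by
        rw [← Real.div_rpow (by positivity) (by norm_num)]
        congr 1; field_simp
      rw [h3] at h1
      calc T x ≤ _ := h1
        _ ≤ (2:ℝ) ^ β * ((t / x) ^ β / 2 ^ β) * ((2:ℝ) ^ β * T t) := by gcongr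
        _ = _ := by field_simp

lemma kfdd_potter (T : ℝ → ℝ) (hpos : ∀ x, 0 < T x) (hone : ∀ x, T x ≤ 1) (hanti : Antitone T)
    (β γ : ℝ) (hβ : 0 < β) (hγ : γ < β)
    (hRV : Tendsto (fun x => T (1 / 2 * x) / T x) atTop (𝓝 ((1 / 2) ^ (-γ)))) :
    ∃ C x0 : ℝ, 0 < x0 ∧ ∀ t v, x0 ≤ t → 0 < v → v ≤ 1 → T (t * v) / T t ≤ C * v ^ (-β) := by
  have hlt : ((1:ℝ) / 2) ^ (-γ) < 2 ^ β := by
    rw [one_div, Real.inv_rpow (by norm_num), Real.rpow_neg (by norm_num), inv_inv]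
    exact Real.rpow_lt_rpow_of_exponent_lt (by norm_num) hγ
  obtain ⟨x1, hx1⟩ := eventually_atTop.1 (hRV.eventually_lt_const hlt)
  set x0 := max x1 1 with hx0
  have hx0p : 0 < x0 := lt_of_lt_of_le one_pos (le_max_right _ _)
  have h2 : ∀ t, x0 ≤ t → T (t / 2) ≤ (2:ℝ) ^ β * T t := by
    intro t ht
    have := hx1 t (le_trans (le_max_left _ _) ht)
    rw [div_lt_iff₀ (hpos t)] at this
    rw [div_eq_mul_one_div, mul_comm t]
    exact this.le
  have key : ∀ x t, x0 ≤ x → x ≤ t → T x ≤ (2:ℝ) ^ β * (t / x) ^ β * T t := by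
    intro x t hx hxt
    obtain ⟨k, hk⟩ := pow_unbounded_of_one_lt (t / x) (one_lt_two)
    refine kfdd_iter T hpos hanti β x0 hβ hx0p h2 k x t hx hxt ?_
    rw [div_lt_iff₀ (by linarith)] at hk
    exact hk.le
  refine ⟨(T x0)⁻¹ * 2 ^ β, x0, hx0p, ?_⟩
  intro t v ht hv hv1
  have htp : 0 < t := by linarith
  rw [div_le_iff₀ (hpos t)]
  have hinv : 1 ≤ (T x0)⁻¹ := (one_le_inv₀ (hpos x0)).2 (hone x0)
  by_cases h : x0 ≤ t * v
  · have h1 := key (t * v) t h (by nlinarith)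
    have h3 : (t / (t * v)) ^ β = v ^ (-β) := by
      rw [Real.rpow_neg hv.le, ← Real.inv_rpow hv.le]; congr 1; field_simp
    rw [h3] at h1
    have h4 : 0 < (2:ℝ) ^ β * v ^ (-β) * T t := by have := hpos t; positivity
    calc T (t * v) ≤ 1 * ((2:ℝ) ^ β * v ^ (-β) * T t) := by linarith
      _ ≤ (T x0)⁻¹ * ((2:ℝ) ^ β * v ^ (-β) * T t) := by gcongr
      _ = _ := by ring
  · push Not at h
    have h1 := key x0 t le_rfl ht
    have h3 : (t / x0) ^ β ≤ v ^ (-β) := by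
      rw [Real.rpow_neg hv.le, ← Real.inv_rpow hv.le]
      refine Real.rpow_le_rpow (by positivity) ?_ hβ.le
      rw [div_le_iff₀ hx0p, inv_mul_eq_div, le_div_iff₀ hv]; exact h.le
    have h5 := hpos t
    have h6 := hpos x0
    calc T (t * v) ≤ 1 := hone _
      _ = (T x0)⁻¹ * T x0 := (inv_mul_cancel₀ h6.ne').symm
      _ ≤ (T x0)⁻¹ * ((2:ℝ) ^ β * (t / x0) ^ β * T t) := by gcongr
      _ ≤ (T x0)⁻¹ * ((2:ℝ) ^ β * v ^ (-β) * T t) := by gcongr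
      _ = _ := by ring

lemma kfdd_karamata (α θ : ℝ) (hα : 0 < α) (hθ : 0 < θ) (hθα : θ < α)
    (T : ℝ → ℝ) (hpos : ∀ x, 0 < T x) (hone : ∀ x, T x ≤ 1) (hanti : Antitone T)
    (hRV : ∀ l, 0 < l → Tendsto (fun x => T (l * x) / T x) atTop (𝓝 (l ^ (θ - α)))) :
    Tendsto (fun t => (∫ u in Set.Ioo (0:ℝ) 1, T (t * u ^ (1 / α))) / T t) atTop
      (𝓝 (α / θ)) := by
  obtain ⟨C, x0, hx0, hC⟩ := kfdd_potter T hpos hone hanti (α - θ / 2) (α - θ) (by linarith)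
    (by linarith) (by simpa using hRV (1 / 2) (by norm_num))
  have hlim : ∫ u in Set.Ioo (0:ℝ) 1, u ^ ((θ - α) / α) = α / θ := by
    rw [← integral_Ioc_eq_integral_Ioo, ← intervalIntegral.integral_of_le zero_le_one,
      integral_rpow]
    · have : (θ - α) / α + 1 = θ / α := by field_simp; ring
      rw [this, one_rpow, zero_rpow (by positivity)]
      field_simp; ring
    · left
      rw [lt_div_iff₀ hα]; linarith
  rw [← hlim]
  simp_rw [← integral_div]
  refine tendsto_integral_filter_of_dominated_convergence
    (fun u => C * u ^ (-(α - θ / 2) / α)) ?_ ?_ ?_ ?_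
  · refine Eventually.of_forall fun t => ?_
    have : Measurable T := hanti.measurable
    exact Measurable.aestronglyMeasurable (by fun_prop)
  · filter_upwards [eventually_ge_atTop x0] with t ht
    refine (ae_restrict_iff' measurableSet_Ioo).2 (Eventually.of_forall fun u hu => ?_)
    have := hpos t
    have h7 := hpos (t * u ^ (1 / α))
    rw [Real.norm_of_nonneg (by positivity)]
    have h := hC t (u ^ (1 / α)) ht (Real.rpow_pos_of_pos hu.1 _)
      (Real.rpow_le_one hu.1.le hu.2.le (by positivity))
    rw [← Real.rpow_mul hu.1.le] at h
    convert h using 3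
    ring
  · refine Integrable.const_mul ?_ _
    refine (integrableOn_Ioc_iff_integrableOn_Ioo (μ := volume) (f := fun u : ℝ => u ^ (-(α - θ / 2) / α))).1 ?_
    rw [← intervalIntegrable_iff_integrableOn_Ioc_of_le zero_le_one]
    apply intervalIntegral.intervalIntegrable_rpow'
    rw [lt_div_iff₀ hα]; linarith
  · refine (ae_restrict_iff' measurableSet_Ioo).2 (Eventually.of_forall fun u hu => ?_)
    have h := hRV (u ^ (1 / α)) (Real.rpow_pos_of_pos hu.1 _)
    rw [← Real.rpow_mul hu.1.le] at h
    convert h using 2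
    · rw [mul_comm]
    · congr 1; ring_nf

/-- Layer cake. -/
lemma kfdd_layer (α : ℝ) (hα : 0 < α) (ν : Measure ℝ) [IsProbabilityMeasure ν] (t : ℝ)
    (ht : 0 < t) :
    Integrable (fun x => min ((max x 0 / t) ^ α) 1) ν ∧
    ∫ x, min ((max x 0 / t) ^ α) 1 ∂ν
      = ∫ u in Set.Ioo (0:ℝ) 1, ν.real (Set.Ioi (t * u ^ (1 / α))) := by
  have hnn : ∀ x : ℝ, 0 ≤ max x 0 / t := fun x => div_nonneg (le_max_right _ _) ht.le
  have hint : Integrable (fun x => min ((max x 0 / t) ^ α) 1) ν := by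
    refine Integrable.of_bound (Measurable.aestronglyMeasurable (by fun_prop)) 1
      (Eventually.of_forall fun x => ?_)
    rw [Real.norm_of_nonneg (le_min (Real.rpow_nonneg (hnn x) _) zero_le_one)]
    exact min_le_right _ _
  refine ⟨hint, ?_⟩
  rw [hint.integral_eq_integral_meas_lt (Eventually.of_forall fun x =>
    le_min (Real.rpow_nonneg (hnn x) _) zero_le_one)]
  rw [setIntegral_eq_of_subset_of_forall_diff_eq_zero (s := Set.Ioo (0:ℝ) 1) measurableSet_Ioi
    (fun x hx => hx.1)]
  · refine setIntegral_congr_fun measurableSet_Ioo fun u hu => ?_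
    show ν.real _ = _
    congr 1
    ext x
    simp only [Set.mem_setOf_eq, Set.mem_Ioi, lt_min_iff, hu.2, and_true]
    have hp : 0 < u ^ (1 / α) := Real.rpow_pos_of_pos hu.1 _
    have : u < (max x 0 / t) ^ α ↔ u ^ (1 / α) < max x 0 / t := by
      rw [one_div, Real.rpow_inv_lt_iff_of_pos hu.1.le (hnn x) hα]
    rw [this, lt_div_iff₀ ht, lt_max_iff, mul_comm]
    have : ¬ (t * u ^ (1 / α) < 0) := by have := mul_pos ht hp; linarith
    tauto
  · intro u hu
    have h1 : 1 ≤ u := by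
      by_contra h
      exact hu.2 ⟨hu.1, not_le.1 h⟩
    have : {a : ℝ | u < min ((max a 0 / t) ^ α) 1} = ∅ := by
      ext x; simp; intro _; exact h1
    rw [this]; simp

lemma kfdd_floor (s t : ℝ) : Tendsto (fun n : ℕ =>
    ((⌊(n : ℝ) * t⌋ - ⌊(n : ℝ) * s⌋ : ℤ) : ℝ) / n) atTop (𝓝 (t - s)) := by
  have h : ∀ r : ℝ, Tendsto (fun n : ℕ => (⌊(n : ℝ) * r⌋ : ℝ) / n) atTop (𝓝 r) := by
    intro r
    have h0 : Tendsto (fun n : ℕ => r - 1 / (n:ℝ)) atTop (𝓝 r) := by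
      simpa using (tendsto_const_nhds (x := r)).sub (tendsto_one_div_atTop_nhds_zero_nat (𝕜 := ℝ))
    refine tendsto_of_tendsto_of_tendsto_of_le_of_le' h0 tendsto_const_nhds ?_ ?_
    · filter_upwards [eventually_gt_atTop 0] with n hn
      have hn' : (0:ℝ) < n := by exact_mod_cast hn
      rw [le_div_iff₀ hn', sub_mul, div_mul_cancel₀ _ hn'.ne']
      have := Int.sub_one_lt_floor ((n:ℝ) * r)
      linarith
    · filter_upwards [eventually_gt_atTop 0] with n hn
      have hn' : (0:ℝ) < n := by exact_mod_cast hn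
      rw [div_le_iff₀ hn']
      have := Int.floor_le ((n:ℝ) * r)
      linarith
  simpa [sub_div] using (h t).sub (h s)

lemma kfdd_exp (G : ℕ → ℝ) (k : ℕ → ℤ) (c : ℝ) (hG : ∀ᶠ n in atTop, G n < 1)
    (hG1 : Tendsto G atTop (𝓝 1)) (hk : Tendsto (fun n => (k n : ℝ) * (1 - G n)) atTop (𝓝 c)) :
    Tendsto (fun n => G n ^ k n) atTop (𝓝 (Real.exp (-c))) := by
  have hd : HasDerivAt Real.log 1 1 := by simpa using Real.hasDerivAt_log (one_ne_zero)
  have hs := hasDerivAt_iff_tendsto_slope.1 hd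
  have hG' : Tendsto G atTop (𝓝[≠] 1) := by
    refine tendsto_nhdsWithin_iff.2 ⟨hG1, ?_⟩
    filter_upwards [hG] with n hn using hn.ne
  have h1 := (hk.mul (hs.comp hG')).neg
  rw [mul_one] at h1
  refine ((Real.continuous_exp.tendsto _).comp h1).congr' ?_
  filter_upwards [hG, hG1.eventually_const_lt (zero_lt_one)] with n hn hp
  simp only [Function.comp, slope_def_field, Real.log_one, sub_zero]
  have : G n - 1 ≠ 0 := by linarith
  rw [← Real.rpow_intCast, Real.rpow_def_of_pos hp]
  congr 1
  field_simp
  ring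

/-- if F̄ = 1 − F is everywhere positive and regularly varying at infinity
with index θ − α (0 < θ < α), and a_n → ∞ with n a_n^{−α} H(a_n) → 1, then for
0 ≤ s ≤ t, z > 0 and ε ∈ {0,1}:
(a) (⌊nt⌋ − ⌊ns⌋) (a_n z)^{−α} H(a_n z) → (t − s) z^{θ−α}, and
(b) G(a_n z)^{⌊nt⌋ − ⌊ns⌋ − ε} → exp( −(α/(α−θ)) (t − s) z^{θ−α} ) as n → ∞. -/
theorem kendall_fdd_limits_regvar
    (α θ : ℝ) (hα : 0 < α) (hθ : 0 < θ) (hθα : θ < α)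
    (ν : Measure ℝ) [IsProbabilityMeasure ν] (hν : ν (Set.Iio 0) = 0)
    (F G H : ℝ → ℝ)
    (hF : ∀ t, F t = (ν (Set.Iic t)).toReal)
    (hG : ∀ t, 0 < t → G t = ∫ x, max (1 - (x / t) ^ α) 0 ∂ν)
    (hH : ∀ t, 0 < t → H t = ∫ x in Set.Icc 0 t, x ^ α ∂ν)
    (htail : ∀ x, F x < 1)
    (hRV : ∀ l, 0 < l →
      Tendsto (fun x => (1 - F (l * x)) / (1 - F x)) atTop (𝓝 (l ^ (θ - α))))
    (a : ℕ → ℝ) (ha : Tendsto a atTop atTop)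
    (haH : Tendsto (fun n : ℕ => (n : ℝ) * (a n) ^ (-α) * H (a n)) atTop (𝓝 1))
    (s t : ℝ) (hs : 0 ≤ s) (hst : s ≤ t) (z : ℝ) (hz : 0 < z)
    (ε : ℤ) (hε : ε = 0 ∨ ε = 1) :
    Tendsto (fun n : ℕ =>
        ((⌊(n : ℝ) * t⌋ - ⌊(n : ℝ) * s⌋ : ℤ) : ℝ) *
          (a n * z) ^ (-α) * H (a n * z)) atTop
      (𝓝 ((t - s) * z ^ (θ - α))) ∧
    Tendsto (fun n : ℕ =>
        G (a n * z) ^ (⌊(n : ℝ) * t⌋ - ⌊(n : ℝ) * s⌋ - ε)) atTop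
      (𝓝 (Real.exp (-(α / (α - θ)) * (t - s) * z ^ (θ - α)))) := by
  set T : ℝ → ℝ := fun x => 1 - F x with hT
  have hTI : ∀ x, T x = ν.real (Set.Ioi x) := by
    intro x
    have := probReal_compl_eq_one_sub (μ := ν) (measurableSet_Iic (a := x))
    rw [Set.compl_Iic] at this
    rw [this, hT]; simp only [hF]; rfl
  have hpos : ∀ x, 0 < T x := fun x => sub_pos.2 (htail x)
  have hone : ∀ x, T x ≤ 1 := fun x => by rw [hTI]; exact measureReal_le_one
  have hanti : Antitone T := fun x y hxy => by
    rw [hTI, hTI]; exact measureReal_mono (Set.Ioi_subset_Ioi hxy)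
  have hK := kfdd_karamata α θ hα hθ hθα T hpos hone hanti hRV
  set M : ℝ → ℝ := fun t => ∫ u in Set.Ioo (0:ℝ) 1, T (t * u ^ (1 / α)) with hM
  have hML : ∀ t, 0 < t → M t = ∫ x, min ((max x 0 / t) ^ α) 1 ∂ν := by
    intro t ht
    rw [(kfdd_layer α hα ν t ht).2, hM]
    simp only [hTI]
  have hae : ∀ᵐ x ∂ν, 0 ≤ x := by
    rw [ae_iff]; simpa [Set.Iio] using hν
  have hGM : ∀ t, 0 < t → G t = 1 - M t := by
    intro t ht
    have h1 : ∫ x, max (1 - (x / t) ^ α) 0 ∂ν = ∫ x, (1 - min ((max x 0 / t) ^ α) 1) ∂ν := by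
      refine integral_congr_ae ?_
      filter_upwards [hae] with x hx
      rw [max_eq_left hx]
      rcases le_total ((x / t) ^ α) 1 with h | h
      · rw [min_eq_left h, max_eq_left (by linarith)]
      · rw [min_eq_right h, max_eq_right (by linarith)]; simp
    rw [hG t ht, h1, integral_sub (integrable_const _) (kfdd_layer α hα ν t ht).1, hML t ht]
    simp
  have hHM : ∀ t, 0 < t → t ^ (-α) * H t = M t - T t := by
    intro t ht
    have hi := (kfdd_layer α hα ν t ht).1
    have e1 : ∫ x, min ((max x 0 / t) ^ α) 1 ∂ν
        = ∫ x in Set.Iic t, min ((max x 0 / t) ^ α) 1 ∂ν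
          + ∫ x in Set.Ioi t, min ((max x 0 / t) ^ α) 1 ∂ν := by
      rw [← Set.compl_Iic]
      exact (integral_add_compl measurableSet_Iic hi).symm
    have e2 : ∫ x in Set.Ioi t, min ((max x 0 / t) ^ α) 1 ∂ν = T t := by
      rw [hTI, setIntegral_congr_fun (g := fun _ => (1:ℝ)) measurableSet_Ioi]
      · simp
      · intro x hx
        have hx' : t < x := hx
        refine min_eq_right (Real.one_le_rpow ?_ hα.le)
        rw [one_le_div ht, max_eq_left (by linarith)]; exact hx'.le
    have e3 : ∫ x in Set.Iic t, min ((max x 0 / t) ^ α) 1 ∂ν = t ^ (-α) * H t := by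
      have hset : (Set.Icc 0 t : Set ℝ) =ᵐ[ν] Set.Iic t := by
        filter_upwards [hae] with x hx
        exact propext ⟨fun h => h.2, fun h => ⟨hx, h⟩⟩
      rw [hH t ht, ← integral_const_mul, ← setIntegral_congr_set hset]
      refine setIntegral_congr_fun measurableSet_Icc fun x hx => ?_
      show min ((max x 0 / t) ^ α) 1 = _
      rw [max_eq_left hx.1, min_eq_left, Real.div_rpow hx.1 ht.le, Real.rpow_neg ht.le]
      · field_simp
      · exact Real.rpow_le_one (div_nonneg hx.1 ht.le) ((div_le_one ht).2 hx.2) hα.le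
    rw [hML t ht, e1, e2, e3]; ring
  have hc : 0 < α - θ := by linarith
  have haz : Tendsto (fun n => a n * z) atTop atTop := ha.atTop_mul_const hz
  have hHT : Tendsto (fun x => (M x - T x) / T x) atTop (𝓝 ((α - θ) / θ)) := by
    have := hK.sub_const 1
    rw [show α / θ - 1 = (α - θ) / θ by field_simp] at this
    refine this.congr fun x => ?_
    rw [sub_div, div_self (hpos x).ne']
  have hne : (α - θ) / θ ≠ 0 := by positivity
  have hnT : Tendsto (fun n : ℕ => (n:ℝ) * T (a n)) atTop (𝓝 (θ / (α - θ))) := by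
    have := haH.div (hHT.comp ha) hne
    rw [one_div_div] at this
    refine this.congr' ?_
    filter_upwards [ha.eventually_gt_atTop 0,
      (hHT.comp ha).eventually_ne hne] with n hn hn2
    simp only [Pi.div_apply, Function.comp] at hn2 ⊢
    rw [mul_assoc, hHM _ hn]
    have h1 := (hpos (a n)).ne'
    have h2 : M (a n) - T (a n) ≠ 0 := fun h => hn2 (by rw [h, zero_div])
    field_simp
  have hnTz : Tendsto (fun n : ℕ => (n:ℝ) * T (a n * z)) atTop
      (𝓝 (θ / (α - θ) * z ^ (θ - α))) := by
    refine (hnT.mul ((hRV z hz).comp ha)).congr fun n => ?_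
    have h1 := (hpos (a n)).ne'
    show (n:ℝ) * T (a n) * (T (z * a n) / T (a n)) = _
    rw [mul_comm z]
    field_simp
  have hnM : Tendsto (fun n : ℕ => (n:ℝ) * M (a n * z)) atTop
      (𝓝 (α / (α - θ) * z ^ (θ - α))) := by
    have := hnTz.mul (hK.comp haz)
    rw [show θ / (α - θ) * z ^ (θ - α) * (α / θ) = α / (α - θ) * z ^ (θ - α) by
      field_simp] at this
    refine this.congr fun n => ?_
    have h1 := (hpos (a n * z)).ne'
    show (n:ℝ) * T (a n * z) * (M (a n * z) / T (a n * z)) = _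
    field_simp
  have hfl := kfdd_floor s t
  have hazp := haz.eventually_gt_atTop 0
  refine ⟨?_, ?_⟩
  · have := hfl.mul (hnM.sub hnTz)
    rw [show (t - s) * (α / (α - θ) * z ^ (θ - α) - θ / (α - θ) * z ^ (θ - α))
      = (t - s) * z ^ (θ - α) by field_simp] at this
    refine this.congr' ?_
    filter_upwards [hazp, eventually_gt_atTop 0] with n hn hn0
    have hn' : (n:ℝ) ≠ 0 := by exact_mod_cast hn0.ne'
    rw [mul_assoc _ ((a n * z) ^ (-α)), hHM _ hn]
    field_simp
  · have hM0 : Tendsto (fun n : ℕ => M (a n * z)) atTop (𝓝 0) := by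
      have := hnM.mul (tendsto_one_div_atTop_nhds_zero_nat (𝕜 := ℝ))
      rw [mul_zero] at this
      refine this.congr' ?_
      filter_upwards [eventually_gt_atTop 0] with n hn0
      have hn' : (n:ℝ) ≠ 0 := by exact_mod_cast hn0.ne'
      field_simp
    have hMpos : ∀ᶠ n : ℕ in atTop, 0 < M (a n * z) := by
      filter_upwards [(hK.comp haz).eventually_const_lt (show 0 < α / θ by positivity)] with n hn
      exact (div_pos_iff_of_pos_right (hpos _)).1 hn
    rw [show -(α / (α - θ)) * (t - s) * z ^ (θ - α)
      = -((t - s) * (α / (α - θ) * z ^ (θ - α)) - ε * 0) by ring]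
    apply kfdd_exp
    · filter_upwards [hMpos, hazp] with n h1 h2
      rw [hGM _ h2]; linarith
    · have := hM0.const_sub 1
      rw [sub_zero] at this
      refine this.congr' ?_
      filter_upwards [hazp] with n h2
      rw [hGM _ h2]
    · refine ((hfl.mul hnM).sub (hM0.const_mul (ε:ℝ))).congr' ?_
      filter_upwards [hazp, eventually_gt_atTop 0] with n h2 hn0
      have hn' : (n:ℝ) ≠ 0 := by exact_mod_cast hn0.ne'
      rw [hGM _ h2]
      push_cast
      field_simp
      ring
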